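/- arXiv:1205.4960 — 2 statements merged into one kernel-verified Lean document; each statement's English description precedes it below -/
import Mathlib

section
/- A group is locally cyclic if and only if it is isomorphic to a section (a quotient of a subgroup) of the additive group of rational numbers ℚ. -/
/-!
A locally cyclic group `A` is commutative, and it embeds in `ℚ` or in `ℚ ⧸ ℤ`, both of which are
quotients of `ℚ`. If some `a : A` has infinite order, divisibility of `ℚ` provides a homomorphism
`A → ℚ` with `a ↦ 1`; it is injective, since every `b` lies in a common cyclic subgroup with `a`.
If `A` is torsion, it is the directed union of its cyclic subgroups, each of which has finitely
many, but at least one, embeddings into `ℚ ⧸ ℤ`; by compactness they can be chosen compatibly.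

Conversely, `ℚ` is locally cyclic because two fractions have a common denominator, and this passes
to subgroups and quotients.
-/

open AddSubgroup CategoryTheory Function Opposite

/-- An additive group is locally cyclic if any two of its elements lie in a common cyclic subgroup;
by induction, so do the elements of any finite set. -/
def IsAddLocallyCyclic (A : Type*) [AddGroup A] : Prop :=
  ∀ a b : A, ∃ c : A, a ∈ zmultiples c ∧ b ∈ zmultiples c

/-- `A` is (isomorphic to) a section of `X`, that is, to a quotient of a subgroup of `X`. The
ambient group `X` is assumed commutative so that every such quotient is a group. -/
def IsSectionOf (A X : Type*) [AddGroup A] [AddCommGroup X] : Prop :=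
  ∃ H : AddSubgroup X, ∃ N : AddSubgroup H, Nonempty (A ≃+ H ⧸ N)

theorem isSectionOf_of_injective_of_surjective {A X D : Type*} [AddGroup A] [AddCommGroup X]
    [AddGroup D] {i : A →+ D} (hi : Injective i) {π : X →+ D} (hπ : Surjective π) :
    IsSectionOf A X :=
  let toRange := π.addSubgroupComap i.range
  have toRange_surjective : Surjective toRange :=
    π.addSubgroupComap_surjective_of_surjective i.range hπ
  ⟨i.range.comap π, toRange.ker, ⟨(AddMonoidHom.ofInjective hi).trans
    (QuotientAddGroup.quotientKerEquivOfSurjective toRange toRange_surjective).symm⟩⟩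

theorem mem_zmultiples_inv_natCast_of_den_dvd {q : ℚ} {n : ℕ} (hn : n ≠ 0) (hq : q.den ∣ n) :
    q ∈ zmultiples (n : ℚ)⁻¹ := by
  obtain ⟨k, rfl⟩ := hq
  have hk : (k : ℚ) ≠ 0 := mod_cast right_ne_zero_of_mul hn
  refine ⟨q.num * k, ?_⟩
  calc (q.num * k : ℤ) • ((q.den * k : ℕ) : ℚ)⁻¹ = q.num / q.den := by
        push_cast [zsmul_eq_mul]; field_simp
    _ = q := q.num_div_den

theorem isAddLocallyCyclic_rat : IsAddLocallyCyclic ℚ := fun x y ↦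
  have hxy : x.den * y.den ≠ 0 := mul_ne_zero x.den_nz y.den_nz
  ⟨((x.den * y.den : ℕ) : ℚ)⁻¹,
    mem_zmultiples_inv_natCast_of_den_dvd hxy (dvd_mul_right ..),
    mem_zmultiples_inv_natCast_of_den_dvd hxy (dvd_mul_left ..)⟩

theorem finite_addMonoidHom_addCircle {C 𝕜 : Type*} [AddGroup C] [Finite C] [AddCommGroup 𝕜]
    [LinearOrder 𝕜] [IsOrderedAddMonoid 𝕜] (p : 𝕜) : Finite (C →+ AddCircle p) := by
  let T := {u : AddCircle p | Nat.card C • u = 0}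
  have : Finite T := AddCircle.finite_torsion p Nat.card_pos
  let toTorsion (f : C →+ AddCircle p) (x : C) : T :=
    ⟨f x, by simp only [T, Set.mem_ofPred_eq, ← map_nsmul, card_nsmul_eq_zero', map_zero]⟩
  refine .of_injective toTorsion fun f g hfg ↦ ?_
  ext x
  exact congrArg Subtype.val (congrFun hfg x)

theorem exists_injective_addCircle_of_isAddCyclic {C 𝕜 : Type*} [AddGroup C] [Finite C]
    [IsAddCyclic C] [Field 𝕜] [LinearOrder 𝕜] [IsStrictOrderedRing 𝕜] (p : 𝕜) [Fact (0 < p)] :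
    ∃ f : C →+ AddCircle p, Injective f := by
  obtain ⟨c, hc⟩ := IsAddCyclic.exists_generator (α := C)
  let u : AddCircle p := ((p / addOrderOf c : 𝕜) : AddCircle p)
  have hu : addOrderOf u = addOrderOf c := AddCircle.addOrderOf_period_div (addOrderOf_pos c)
  let e : C ≃+ zmultiples u := addEquivOfAddOrderOfEq hc
    (g' := ⟨u, mem_zmultiples u⟩) (by rintro ⟨_, n, rfl⟩; exact ⟨n, rfl⟩)
    (by rw [addOrderOf_mk, hu])
  exact ⟨(zmultiples u).subtype.comp e.toAddMonoidHom, Subtype.val_injective.comp e.injective⟩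

theorem finite_of_isAddTorsion_of_isAddCyclic {C : Type*} [AddGroup C] [IsAddCyclic C]
    (hC : IsAddTorsion C) : Finite C := by
  obtain ⟨c, hc⟩ := IsAddCyclic.exists_generator (α := C)
  have hfin : (zmultiples c : Set C).Finite := finite_zmultiples.mpr (hC c)
  rwa [(eq_top_iff' _).mpr hc, coe_top, Set.finite_univ_iff] at hfin

/-- The cyclic subgroups of `A`, ordered by inclusion: the index set over which a locally cyclic
group is a directed union. -/
abbrev CyclicAddSubgroup (A : Type*) [AddGroup A] : Type _ :=
  {C : AddSubgroup A // IsAddCyclic C}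

/-- The inverse system of embeddings into `B` of the cyclic subgroups of `A`, with restriction as
transition maps; its sections are the embeddings of `A` into `B` when `A` is locally cyclic. -/
def cyclicEmbeddings (A B : Type*) [AddGroup A] [AddGroup B] :
    (CyclicAddSubgroup A)ᵒᵖ ⥤ Type _ where
  obj C := {f : C.unop.1 →+ B // Injective f}
  map h := TypeCat.ofHom fun f ↦ ⟨f.1.comp (inclusion (leOfHom h.unop)),
    f.2.comp (inclusion_injective (leOfHom h.unop))⟩

namespace IsAddLocallyCyclic

variable {A B : Type*} [AddGroup A] [AddGroup B]

theorem add_comm (hA : IsAddLocallyCyclic A) (a b : A) : a + b = b + a := by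
  obtain ⟨c, ⟨m, rfl⟩, n, rfl⟩ := hA a b
  exact zsmul_add_comm c m n

theorem of_surjective (hA : IsAddLocallyCyclic A) {f : A →+ B} (hf : Surjective f) :
    IsAddLocallyCyclic B := by
  intro x y
  obtain ⟨a, rfl⟩ := hf x
  obtain ⟨b, rfl⟩ := hf y
  obtain ⟨c, hac, hbc⟩ := hA a b
  refine ⟨f c, ?_⟩
  rw [← AddMonoidHom.map_zmultiples]
  exact ⟨mem_map_of_mem f hac, mem_map_of_mem f hbc⟩

theorem of_injective (hB : IsAddLocallyCyclic B) {f : A →+ B} (hf : Injective f) :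
    IsAddLocallyCyclic A := by
  intro a b
  obtain ⟨c, hac, hbc⟩ := hB (f a) (f b)
  let K := (zmultiples c).comap f
  have : IsAddCyclic K :=
    isAddCyclic_of_injective (f.addSubgroupComap (zmultiples c))
      fun x y hxy ↦ Subtype.ext (hf (congrArg Subtype.val hxy))
  obtain ⟨d, hd⟩ := K.isAddCyclic_iff_exists_zmultiples_eq_top.mp this
  exact ⟨d, hd ▸ hac, hd ▸ hbc⟩

theorem of_isSectionOf {X : Type*} [AddCommGroup X] (hX : IsAddLocallyCyclic X)
    (hA : IsSectionOf A X) : IsAddLocallyCyclic A := by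
  obtain ⟨H, N, ⟨e⟩⟩ := hA
  have hH : IsAddLocallyCyclic H := hX.of_injective H.subtype_injective
  have hHN : IsAddLocallyCyclic (H ⧸ N) := hH.of_surjective (QuotientAddGroup.mk'_surjective N)
  exact hHN.of_injective (f := e.toAddMonoidHom) e.injective

theorem injective_of_map_ne_zero [IsAddTorsionFree B] (hA : IsAddLocallyCyclic A) {f : A →+ B}
    {a : A} (ha : f a ≠ 0) : Injective f := by
  rw [injective_iff_map_eq_zero]
  intro b hb
  obtain ⟨c, ⟨m, rfl⟩, n, rfl⟩ := hA a b
  have hc : f c ≠ 0 := fun hc ↦ ha (by simp [hc])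
  have hn : n = 0 := by simpa [hc] using hb
  simp [hn]

theorem isDirectedOrder_cyclicAddSubgroup (hA : IsAddLocallyCyclic A) :
    IsDirectedOrder (CyclicAddSubgroup A) := by
  refine ⟨fun ⟨C, hC⟩ ⟨C', hC'⟩ ↦ ?_⟩
  obtain ⟨c, rfl⟩ := C.isAddCyclic_iff_exists_zmultiples_eq_top.mp hC
  obtain ⟨c', rfl⟩ := C'.isAddCyclic_iff_exists_zmultiples_eq_top.mp hC'
  obtain ⟨d, hc, hc'⟩ := hA c c'
  exact ⟨⟨zmultiples d, inferInstance⟩, zmultiples_le_of_mem hc, zmultiples_le_of_mem hc'⟩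

theorem exists_addMonoidHom_of_compatible (hA : IsAddLocallyCyclic A)
    (f : ∀ C : CyclicAddSubgroup A, C.1 →+ B)
    (hf : ∀ (C C' : CyclicAddSubgroup A) (h : C.1 ≤ C'.1) (x : C.1),
      f C' (inclusion h x) = f C x) :
    ∃ g : A →+ B, ∀ (C : CyclicAddSubgroup A) (x : C.1), g x = f C x := by
  let g (a : A) : B := f ⟨zmultiples a, inferInstance⟩ ⟨a, mem_zmultiples a⟩
  have hg (C : CyclicAddSubgroup A) (x : C.1) : g x = f C x :=
    (hf ⟨zmultiples (x : A), inferInstance⟩ C (zmultiples_le_of_mem x.2) ⟨x, _⟩).symm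
  refine ⟨AddMonoidHom.mk' g fun a b ↦ ?_, hg⟩
  obtain ⟨c, ha, hb⟩ := hA a b
  let C : CyclicAddSubgroup A := ⟨zmultiples c, inferInstance⟩
  calc g (a + b) = f C (⟨a, ha⟩ + ⟨b, hb⟩) := hg C (⟨a, ha⟩ + ⟨b, hb⟩)
    _ = f C ⟨a, ha⟩ + f C ⟨b, hb⟩ := map_add ..
    _ = g a + g b := by rw [← hg, ← hg]

theorem exists_injective_of_cyclicAddSubgroup (hA : IsAddLocallyCyclic A)
    (hfin : ∀ C : CyclicAddSubgroup A, Finite {f : C.1 →+ B // Injective f})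
    (hne : ∀ C : CyclicAddSubgroup A, ∃ f : C.1 →+ B, Injective f) :
    ∃ f : A →+ B, Injective f := by
  have := hA.isDirectedOrder_cyclicAddSubgroup
  have (C : (CyclicAddSubgroup A)ᵒᵖ) : Finite ((cyclicEmbeddings A B).obj C) := hfin C.unop
  have (C : (CyclicAddSubgroup A)ᵒᵖ) : Nonempty ((cyclicEmbeddings A B).obj C) :=
    nonempty_subtype.mpr (hne C.unop)
  obtain ⟨s, hs⟩ := nonempty_sections_of_finite_inverse_system (cyclicEmbeddings A B)
  obtain ⟨g, hg⟩ := hA.exists_addMonoidHom_of_compatible (fun C ↦ (s (op C)).1)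
    fun C C' h x ↦ DFunLike.congr_fun (congrArg Subtype.val (hs (homOfLE h : C ⟶ C').op)) x
  refine ⟨g, fun a b hab ↦ ?_⟩
  obtain ⟨c, ha, hb⟩ := hA a b
  let C : CyclicAddSubgroup A := ⟨zmultiples c, inferInstance⟩
  have hC : (s (op C)).1 ⟨a, ha⟩ = (s (op C)).1 ⟨b, hb⟩ := by
    rw [← hg C, ← hg C]; exact hab
  exact congrArg Subtype.val ((s (op C)).2 hC)

theorem exists_injective_addCircle {𝕜 : Type*} [Field 𝕜] [LinearOrder 𝕜] [IsStrictOrderedRing 𝕜]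
    (p : 𝕜) [Fact (0 < p)] (hA : IsAddLocallyCyclic A) (htors : IsAddTorsion A) :
    ∃ f : A →+ AddCircle p, Injective f := by
  have hfin (C : CyclicAddSubgroup A) : Finite C.1 :=
    have := C.2
    finite_of_isAddTorsion_of_isAddCyclic (htors.addSubgroup C.1)
  refine hA.exists_injective_of_cyclicAddSubgroup (fun C ↦ ?_) fun C ↦ ?_
  · have := finite_addMonoidHom_addCircle (C := C.1) p
    infer_instance
  · have := C.2
    exact exists_injective_addCircle_of_isAddCyclic p

theorem exists_injective_of_not_isAddTorsion {B : Type*} [AddCommGroup B] [DivisibleBy B ℤ]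
    [IsAddTorsionFree B] [Nontrivial B] (hA : IsAddLocallyCyclic A) (hnot : ¬ IsAddTorsion A) :
    ∃ f : A →+ B, Injective f := by
  let _ : AddCommGroup A := { ‹AddGroup A› with add_comm := hA.add_comm }
  obtain ⟨a, ha⟩ := not_forall.mp hnot
  obtain ⟨b, hb⟩ := exists_ne (0 : B)
  obtain ⟨f, hf⟩ := (Module.Baer.of_divisible B).extension_property_addMonoidHom
    (zmultiplesHom A a) (injective_zsmul_iff_not_isOfFinAddOrder.mpr ha) (zmultiplesHom B b)
  have hfa : f a = b := by simpa using DFunLike.congr_fun hf 1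
  exact ⟨f, hA.injective_of_map_ne_zero (hfa.trans_ne hb)⟩

theorem isSectionOf_rat (hA : IsAddLocallyCyclic A) : IsSectionOf A ℚ := by
  by_cases htors : IsAddTorsion A
  · obtain ⟨f, hf⟩ := hA.exists_injective_addCircle (1 : ℚ) htors
    exact isSectionOf_of_injective_of_surjective hf
      (QuotientAddGroup.mk'_surjective (zmultiples (1 : ℚ)))
  · obtain ⟨f, hf⟩ := hA.exists_injective_of_not_isAddTorsion (B := ℚ) htors
    exact isSectionOf_of_injective_of_surjective hf (π := AddMonoidHom.id ℚ) surjective_id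

end IsAddLocallyCyclic

theorem isAddLocallyCyclic_iff_isSectionOf_rat {A : Type*} [AddGroup A] :
    IsAddLocallyCyclic A ↔ IsSectionOf A ℚ :=
  ⟨fun hA ↦ hA.isSectionOf_rat, isAddLocallyCyclic_rat.of_isSectionOf⟩

theorem isSectionOf_additive_iff {G X : Type*} [Group G] [AddCommGroup X] :
    IsSectionOf (Additive G) X ↔
      ∃ H : AddSubgroup X, ∃ N : AddSubgroup H, Nonempty (G ≃* Multiplicative (H ⧸ N)) :=
  exists₂_congr fun _ _ ↦ AddEquiv.toMultiplicativeRight.nonempty_congr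

/-- A group is locally cyclic if and only if it is isomorphic to a section
(a quotient of a subgroup) of the additive group of rational numbers. -/
theorem locallyCyclic_iff_section_of_rat (G : Type*) [Group G] :
    (∀ a b : G, ∃ c : G, a ∈ Subgroup.zpowers c ∧ b ∈ Subgroup.zpowers c) ↔
      ∃ H : AddSubgroup ℚ, ∃ N : AddSubgroup H,
        Nonempty (G ≃* Multiplicative (H ⧸ N)) := by
  calc (∀ a b : G, ∃ c : G, a ∈ Subgroup.zpowers c ∧ b ∈ Subgroup.zpowers c)
    _ ↔ IsAddLocallyCyclic (Additive G) := Iff.rfl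
    _ ↔ IsSectionOf (Additive G) ℚ := isAddLocallyCyclic_iff_isSectionOf_rat
    _ ↔ ∃ H : AddSubgroup ℚ, ∃ N : AddSubgroup H, Nonempty (G ≃* Multiplicative (H ⧸ N)) :=
      isSectionOf_additive_iff
end

section
/- A finite permutation group G has orbit partition set π(G) totally ordered by refinement if and only if G is cyclic of prime-power order and acts with all its orbits regular (equivalently, for finite transitive G: π(G) is a chain iff G is cyclic of prime-power order acting regularly). -/
/-- The orbit partition of a permutation `g`, as a setoid on `Ω`. -/
def piPart {Ω : Type*} (g : Equiv.Perm Ω) : Setoid Ω :=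
  MulAction.orbitRel (Subgroup.zpowers g) Ω

/-- The set of orbit partitions of elements of a permutation group `G`. -/
def piSet {Ω : Type*} (G : Subgroup (Equiv.Perm Ω)) : Set (Setoid Ω) :=
  {P | ∃ g ∈ G, piPart g = P}

/-- `G` is join-coherent if its set of orbit partitions is closed under joins. -/
def JoinCoherent {Ω : Type*} (G : Subgroup (Equiv.Perm Ω)) : Prop :=
  ∀ P ∈ piSet G, ∀ Q ∈ piSet G, P ⊔ Q ∈ piSet G

/-- `G` is meet-coherent if its set of orbit partitions is closed under meets. -/
def MeetCoherent {Ω : Type*} (G : Subgroup (Equiv.Perm Ω)) : Prop :=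
  ∀ P ∈ piSet G, ∀ Q ∈ piSet G, P ⊓ Q ∈ piSet G

/-!
Comparing `π(g)` with `π(h)` at a point fixed by `h` shows that if the orbit partitions form a
chain, then so do the point stabilizers. When `G` is finite, the smallest stabilizer is contained
in all the others and is therefore trivial. If `x` is a point with trivial stabilizer, then
`π(g) ≤ π(h)` gives `g x = h ^ n x` for some `n`, whence `g = h ^ n`. So `π(G)` is a chain exactly
when the cyclic subgroups of `G` form a chain, and for a finite group this means being cyclic of
prime-power order. Point stabilizers are constant on orbits because a cyclic group is abelian.
-/

open Subgroup MulAction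

section CyclicSubgroups

variable {G : Type*} [Group G] [Finite G]

lemma isCyclic_of_isChain_zpowers (hG : IsChain (· ≤ ·) (Set.range (zpowers (G := G)))) :
    IsCyclic G := by
  obtain ⟨g, hg⟩ := (directedOn_range.1 hG.directedOn).finite_le id
  exact ⟨g, fun h ↦ hg h (mem_zpowers h)⟩

lemma eq_of_prime_dvd_card_of_isChain_zpowers
    (hG : IsChain (· ≤ ·) (Set.range (zpowers (G := G)))) {p q : ℕ} (hp : p.Prime) (hq : q.Prime)
    (hpG : p ∣ Nat.card G) (hqG : q ∣ Nat.card G) : p = q := by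
  have : Fact p.Prime := ⟨hp⟩
  have : Fact q.Prime := ⟨hq⟩
  obtain ⟨a, rfl⟩ := exists_prime_orderOf_dvd_card' p hpG
  obtain ⟨b, rfl⟩ := exists_prime_orderOf_dvd_card' q hqG
  rcases hG.total ⟨a, rfl⟩ ⟨b, rfl⟩ with hab | hba
  · exact (Nat.prime_dvd_prime_iff_eq hp hq).1 (orderOf_dvd_of_mem_zpowers (zpowers_le.1 hab))
  · exact ((Nat.prime_dvd_prime_iff_eq hq hp).1
      (orderOf_dvd_of_mem_zpowers (zpowers_le.1 hba))).symm

lemma exists_card_eq_prime_pow_of_isChain_zpowers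
    (hG : IsChain (· ≤ ·) (Set.range (zpowers (G := G)))) :
    ∃ p k : ℕ, p.Prime ∧ Nat.card G = p ^ k := by
  by_cases hcard : Nat.card G = 1
  · exact ⟨2, 0, Nat.prime_two, hcard⟩
  · obtain ⟨p, hp, hpG⟩ := Nat.exists_prime_and_dvd hcard
    exact ⟨p, _, hp, Nat.eq_prime_pow_of_unique_prime_dvd Nat.card_pos.ne' fun hq hqG ↦
      eq_of_prime_dvd_card_of_isChain_zpowers hG hq hp hqG hpG⟩

lemma zpowers_le_zpowers_iff_orderOf_dvd [IsCyclic G] {a b : G} :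
    zpowers a ≤ zpowers b ↔ orderOf a ∣ orderOf b := by
  refine ⟨fun hab ↦ orderOf_dvd_of_mem_zpowers (zpowers_le.1 hab), fun hab ↦ ?_⟩
  let : CommGroup G := IsCyclic.commGroup
  let torsion : Subgroup G := (powMonoidHom (orderOf b) : G →* G).ker
  have hle : zpowers b ≤ torsion := zpowers_le.2 (pow_orderOf_eq_one b)
  have hcard : Nat.card torsion = Nat.card (zpowers b) := by
    rw [IsCyclic.card_powMonoidHom_ker, Nat.card_zpowers,
      Nat.gcd_eq_right (orderOf_dvd_natCard b)]
  rw [eq_of_le_of_card_ge hle hcard.le]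
  exact zpowers_le.2 (orderOf_dvd_iff_pow_eq_one.1 hab)

lemma isChain_zpowers_of_card_eq_prime_pow [IsCyclic G] {p k : ℕ} (hp : p.Prime)
    (hcard : Nat.card G = p ^ k) : IsChain (· ≤ ·) (Set.range (zpowers (G := G))) := by
  rintro _ ⟨a, rfl⟩ _ ⟨b, rfl⟩ -
  simp only [zpowers_le_zpowers_iff_orderOf_dvd]
  obtain ⟨i, -, hi⟩ := (Nat.dvd_prime_pow hp).1 (hcard ▸ orderOf_dvd_natCard a)
  obtain ⟨j, -, hj⟩ := (Nat.dvd_prime_pow hp).1 (hcard ▸ orderOf_dvd_natCard b)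
  rw [hi, hj]
  exact (le_total i j).imp (pow_dvd_pow p) (pow_dvd_pow p)

theorem isChain_zpowers_iff_isCyclic_and_card_eq_prime_pow :
    IsChain (· ≤ ·) (Set.range (zpowers (G := G))) ↔
      IsCyclic G ∧ ∃ p k : ℕ, p.Prime ∧ Nat.card G = p ^ k :=
  ⟨fun hG ↦ ⟨isCyclic_of_isChain_zpowers hG, exists_card_eq_prime_pow_of_isChain_zpowers hG⟩,
    fun ⟨_, _, _, hp, hcard⟩ ↦ isChain_zpowers_of_card_eq_prime_pow hp hcard⟩

end CyclicSubgroups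

section OrbitPartitions

variable {Ω : Type*}

lemma piPart_apply {g : Equiv.Perm Ω} {x y : Ω} : piPart g x y ↔ g.SameCycle x y := by
  rw [Equiv.Perm.sameCycle_comm, piPart, orbitRel_apply, mem_orbit_iff, Subtype.exists]
  simp [mem_zpowers_iff, Equiv.Perm.SameCycle, Subgroup.smul_def]

lemma piPart_le_piPart_of_mem_zpowers {g h : Equiv.Perm Ω} (hgh : g ∈ zpowers h) :
    piPart g ≤ piPart h := by
  obtain ⟨n, rfl⟩ := hgh
  exact fun _ _ hxy ↦ piPart_apply.2 (piPart_apply.1 hxy).of_zpow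

lemma sameCycle_apply_of_piPart_le {g h : Equiv.Perm Ω} (hgh : piPart g ≤ piPart h) (x : Ω) :
    h.SameCycle x (g x) :=
  piPart_apply.1 (hgh (piPart_apply.2 ⟨1, rfl⟩))

lemma apply_eq_self_of_piPart_le {g h : Equiv.Perm Ω} (hgh : piPart g ≤ piPart h) {x : Ω}
    (hx : h x = x) : g x = x :=
  ((sameCycle_apply_of_piPart_le hgh x).eq_of_left hx).symm

variable {G : Subgroup (Equiv.Perm Ω)}

lemma piPart_total_of_isChain_piSet (hG : IsChain (· ≤ ·) (piSet G)) (a b : G) :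
    piPart a.1 ≤ piPart b.1 ∨ piPart b.1 ≤ piPart a.1 :=
  hG.total ⟨a, a.2, rfl⟩ ⟨b, b.2, rfl⟩

lemma isChain_stabilizer_of_isChain_piSet (hG : IsChain (· ≤ ·) (piSet G)) :
    IsChain (· ≤ ·) (Set.range fun x : Ω ↦ stabilizer G x) := by
  rintro _ ⟨x, rfl⟩ _ ⟨y, rfl⟩ -
  by_contra! hxy
  obtain ⟨⟨a, hax, hay⟩, ⟨b, hby, hbx⟩⟩ := hxy.imp SetLike.not_le_iff_exists.1
    SetLike.not_le_iff_exists.1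
  rcases piPart_total_of_isChain_piSet hG a b with hab | hba
  · exact hay (apply_eq_self_of_piPart_le hab hby)
  · exact hbx (apply_eq_self_of_piPart_le hba hax)

lemma exists_stabilizer_eq_bot_of_isChain_piSet [Finite G] [Nonempty Ω]
    (hG : IsChain (· ≤ ·) (piSet G)) : ∃ x : Ω, stabilizer G x = ⊥ := by
  obtain ⟨x, -, hmin⟩ :=
    exists_minimalFor_of_wellFoundedLT (fun _ : Ω ↦ True) (stabilizer G) (by simp)
  have hle (y : Ω) : stabilizer G x ≤ stabilizer G y :=
    ((isChain_stabilizer_of_isChain_piSet hG).total ⟨x, rfl⟩ ⟨y, rfl⟩).elim id (hmin trivial)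
  exact ⟨x, (eq_bot_iff_forall _).2 fun g hg ↦ Subtype.ext (Equiv.ext fun y ↦ hle y hg)⟩

lemma mem_zpowers_of_piPart_le_of_stabilizer_eq_bot {x : Ω} (hx : stabilizer G x = ⊥) {a b : G}
    (hab : piPart a.1 ≤ piPart b.1) : a ∈ zpowers b := by
  obtain ⟨n, hn⟩ := sameCycle_apply_of_piPart_le hab x
  have hfix : a⁻¹ * b ^ n ∈ stabilizer G x := by
    rw [mem_stabilizer_iff, mul_smul, inv_smul_eq_iff]
    exact hn
  rw [hx, mem_bot, inv_mul_eq_one] at hfix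
  exact ⟨n, hfix.symm⟩

lemma isChain_zpowers_of_isChain_piSet [Finite G] (hG : IsChain (· ≤ ·) (piSet G)) :
    IsChain (· ≤ ·) (Set.range (zpowers (G := G))) := by
  rintro _ ⟨a, rfl⟩ _ ⟨b, rfl⟩ -
  rcases isEmpty_or_nonempty Ω with _ | _
  · exact .inl (zpowers_le.2 (Subsingleton.elim 1 a ▸ one_mem _))
  · obtain ⟨x, hx⟩ := exists_stabilizer_eq_bot_of_isChain_piSet hG
    exact (piPart_total_of_isChain_piSet hG a b).imp
      (fun hab ↦ zpowers_le.2 (mem_zpowers_of_piPart_le_of_stabilizer_eq_bot hx hab))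
      (fun hba ↦ zpowers_le.2 (mem_zpowers_of_piPart_le_of_stabilizer_eq_bot hx hba))

lemma isChain_piSet_of_isChain_zpowers
    (hG : IsChain (· ≤ ·) (Set.range (zpowers (G := G)))) : IsChain (· ≤ ·) (piSet G) := by
  have piPart_mono {a b : G} (hab : zpowers a ≤ zpowers b) : piPart a.1 ≤ piPart b.1 :=
    piPart_le_piPart_of_mem_zpowers
      (G.subtype.map_zpowers b ▸ mem_map_of_mem G.subtype (zpowers_le.1 hab))
  rintro _ ⟨a, ha, rfl⟩ _ ⟨b, hb, rfl⟩ -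
  exact (hG.total ⟨⟨a, ha⟩, rfl⟩ ⟨⟨b, hb⟩, rfl⟩).imp piPart_mono piPart_mono

theorem isChain_piSet_iff_isChain_zpowers [Finite G] :
    IsChain (· ≤ ·) (piSet G) ↔ IsChain (· ≤ ·) (Set.range (zpowers (G := G))) :=
  ⟨isChain_zpowers_of_isChain_piSet, isChain_piSet_of_isChain_zpowers⟩

lemma apply_apply_eq_self_of_isMulCommutative [IsMulCommutative G] {g h : Equiv.Perm Ω}
    (hg : g ∈ G) (hh : h ∈ G) {x : Ω} (hx : g x = x) : g (h x) = h x :=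
  Function.IsFixedPt.map hx (DFunLike.congr_fun (setLike_mul_comm hh hg))

end OrbitPartitions

theorem finite_chain_iff_cyclic_primePow_general {Ω : Type*}
    (G : Subgroup (Equiv.Perm Ω)) [Finite G] :
    IsChain (· ≤ ·) (piSet G) ↔
      (IsCyclic ↥G ∧ (∃ p k : ℕ, p.Prime ∧ Nat.card ↥G = p ^ k) ∧
        ∀ g ∈ G, ∀ x y : Ω, (∃ h ∈ G, h x = y) → g x = x → g y = y) := by
  rw [isChain_piSet_iff_isChain_zpowers, isChain_zpowers_iff_isCyclic_and_card_eq_prime_pow]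
  refine ⟨fun ⟨hcyc, hcard⟩ ↦ ⟨hcyc, hcard, ?_⟩, fun ⟨hcyc, hcard, _⟩ ↦ ⟨hcyc, hcard⟩⟩
  rintro g hg x _ ⟨h, hh, rfl⟩ hx
  exact apply_apply_eq_self_of_isMulCommutative hg hh hx

/-- For a permutation group `G` of finite degree, the set of orbit partitions of elements
of `G` is totally ordered by refinement if and only if `G` is cyclic of prime-power order
and the permutation group induced by `G` on each of its orbits is regular. -/
theorem finite_chain_iff_cyclic_primePow {Ω : Type*} [Finite Ω]
    (G : Subgroup (Equiv.Perm Ω)) :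
    IsChain (· ≤ ·) (piSet G) ↔
      (IsCyclic ↥G ∧ (∃ p k : ℕ, p.Prime ∧ Nat.card ↥G = p ^ k) ∧
        ∀ g ∈ G, ∀ x y : Ω, (∃ h ∈ G, h x = y) → g x = x → g y = y) :=
  finite_chain_iff_cyclic_primePow_general G
end
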